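/- (Pair symmetry of the curvature for a Levi-Civita structure, Eq. LGS.1b.) Suppose the connection D on U is g-compatible and symmetric (Γ x u v = Γ x v u for all x, u, v). Then for all vector fields a, b, c, d on U and every x ∈ U: ⟪g x (ρ(a,b,c) x), d x⟫ = ⟪g x (ρ(c,d,a) x), b x⟫, i.e. ρ(a,b,c) ·_g d = ρ(c,d,a) ·_g b. -/

import Mathlib

open scoped RealInnerProductSpace

variable {V : Type*} [NormedAddCommGroup V] [InnerProductSpace ℝ V] [FiniteDimensional ℝ V]

/-- A vector field on `U` is a smooth map `U → V`. -/
def IsVectorField (U : Set V) (X : V → V) : Prop := ContDiffOn ℝ (⊤ : ℕ∞) X U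

/-- Directional derivative `(a·∂X)(x) = fderiv ℝ X x (a x)`. -/
noncomputable def dirD (a X : V → V) : V → V := fun x => fderiv ℝ X x (a x)

/-- Lie bracket `[a,b] = a·∂b − b·∂a`. -/
noncomputable def bracket (a b : V → V) : V → V := fun x => dirD a b x - dirD b a x

/-- Smoothness of a connection field `Γ`. -/
def IsConnection (U : Set V) (Γ : V → V →ₗ[ℝ] V →ₗ[ℝ] V) : Prop :=
  ∀ u v : V, ContDiffOn ℝ (⊤ : ℕ∞) (fun x => Γ x u v) U

/-- Covariant derivative associated to the connection field `Γ`. -/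
noncomputable def covD (Γ : V → V →ₗ[ℝ] V →ₗ[ℝ] V) (a X : V → V) : V → V :=
  fun x => fderiv ℝ X x (a x) + Γ x (a x) (X x)

/-- Curvature of an abstract covariant-derivative operator. -/
noncomputable def curvOf (Dop : (V → V) → (V → V) → (V → V)) (a b c : V → V) : V → V :=
  fun x => Dop a (Dop b c) x - Dop b (Dop a c) x - Dop (bracket a b) c x

/-- Curvature field `ρ(a,b,c) = D_a (D_b c) − D_b (D_a c) − D_{[a,b]} c`. -/
noncomputable def curv (Γ : V → V →ₗ[ℝ] V →ₗ[ℝ] V) : (V → V) → (V → V) → (V → V) → V → V :=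
  curvOf (covD Γ)

/-- A metric on `U`: smooth, pointwise self-adjoint and invertible. -/
def IsMetric (U : Set V) (g : V → V →ₗ[ℝ] V) : Prop :=
  (∀ u : V, ContDiffOn ℝ (⊤ : ℕ∞) (fun x => g x u) U) ∧
  ∀ x ∈ U, (∀ u v : V, ⟪g x u, v⟫ = ⟪u, g x v⟫) ∧ Function.Bijective (g x)

/-- Compatibility of an abstract covariant-derivative operator with the metric `g`:
`a·∂(X ·_g Y) = (D_a X) ·_g Y + X ·_g (D_a Y)` on `U`. -/
def CompatibleD (U : Set V) (Dop : (V → V) → (V → V) → (V → V)) (g : V → V →ₗ[ℝ] V) : Prop :=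
  ∀ a X Y : V → V, IsVectorField U a → IsVectorField U X → IsVectorField U Y →
    ∀ x ∈ U, fderiv ℝ (fun y => ⟪g y (X y), Y y⟫) x (a x) =
      ⟪g x (Dop a X x), Y x⟫ + ⟪g x (X x), Dop a Y x⟫

/-- Compatibility of the connection `Γ` with the metric `g`. -/
def Compatible (U : Set V) (Γ : V → V →ₗ[ℝ] V →ₗ[ℝ] V) (g : V → V →ₗ[ℝ] V) : Prop :=
  CompatibleD U (covD Γ) g

theorem aux_gam {U : Set V} {Γ : V → V →ₗ[ℝ] V →ₗ[ℝ] V} (hΓ : IsConnection U Γ)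
    {a b : V → V} (ha : IsVectorField U a) (hb : IsVectorField U b) :
    IsVectorField U (fun y => Γ y (a y) (b y)) := by
  unfold IsVectorField at *
  let e := Module.finBasis ℝ V
  have key : (fun y => Γ y (a y) (b y)) = fun y => ∑ i, ∑ j,
      (e.coord i (a y)) • (e.coord j (b y)) • Γ y (e i) (e j) := by
    funext y
    conv_lhs => rw [← e.sum_repr (a y), ← e.sum_repr (b y)]
    simp only [map_sum, map_smul, LinearMap.sum_apply, LinearMap.smul_apply, Finset.smul_sum,
      Module.Basis.coord_apply]
    rw [Finset.sum_comm]
    refine Finset.sum_congr rfl fun i _ => Finset.sum_congr rfl fun j _ => ?_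
    first | rfl | exact smul_comm _ _ _
  rw [key]
  have hco : ∀ i, ContDiff ℝ (⊤ : ℕ∞) (fun v => e.coord i v) := fun i =>
    (LinearMap.toContinuousLinearMap (e.coord i)).contDiff
  refine ContDiffOn.sum fun i _ => ContDiffOn.sum fun j _ => ?_
  exact ((hco i).comp_contDiffOn ha).smul (((hco j).comp_contDiffOn hb).smul (hΓ _ _))

theorem aux_g {U : Set V} {g : V → V →ₗ[ℝ] V} (hg : IsMetric U g)
    {a : V → V} (ha : IsVectorField U a) :
    IsVectorField U (fun y => g y (a y)) := by
  unfold IsVectorField at *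
  let e := Module.finBasis ℝ V
  have key : (fun y => g y (a y)) = fun y => ∑ i, (e.coord i (a y)) • g y (e i) := by
    funext y
    conv_lhs => rw [← e.sum_repr (a y)]
    simp only [map_sum, map_smul, Module.Basis.coord_apply]
  rw [key]
  have hco : ∀ i, ContDiff ℝ (⊤ : ℕ∞) (fun v => e.coord i v) := fun i =>
    (LinearMap.toContinuousLinearMap (e.coord i)).contDiff
  exact ContDiffOn.sum fun i _ => ((hco i).comp_contDiffOn ha).smul (hg.1 _)

theorem aux_dir {U : Set V} (hU : IsOpen U) {a b : V → V}
    (ha : IsVectorField U a) (hb : IsVectorField U b) : IsVectorField U (dirD a b) := by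
  unfold IsVectorField at *
  exact (hb.fderiv_of_isOpen hU (by simp)).clm_apply ha

theorem aux_cov {U : Set V} (hU : IsOpen U) {Γ : V → V →ₗ[ℝ] V →ₗ[ℝ] V} (hΓ : IsConnection U Γ)
    {a b : V → V} (ha : IsVectorField U a) (hb : IsVectorField U b) :
    IsVectorField U (covD Γ a b) :=
  ContDiffOn.add (aux_dir hU ha hb) (aux_gam hΓ ha hb)

theorem aux_br {U : Set V} (hU : IsOpen U) {a b : V → V}
    (ha : IsVectorField U a) (hb : IsVectorField U b) : IsVectorField U (bracket a b) :=
  ContDiffOn.sub (aux_dir hU ha hb) (aux_dir hU hb ha)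

theorem aux_diff {U : Set V} (hU : IsOpen U) {a : V → V}
    (ha : IsVectorField U a) {x : V} (hx : x ∈ U) : DifferentiableAt ℝ a x :=
  (ContDiffOn.contDiffAt ha (hU.mem_nhds hx)).differentiableAt (by simp)

theorem curv_anti (Γ : V → V →ₗ[ℝ] V →ₗ[ℝ] V) (a b c : V → V) (x : V) :
    curv Γ a b c x = - curv Γ b a c x := by
  have : bracket b a x = - bracket a b x := by simp [bracket]
  have h2 : covD Γ (bracket b a) c x = - covD Γ (bracket a b) c x := by
    simp only [covD, this]; simp; abel
  simp only [curv, curvOf, h2]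
  abel

theorem cov_tors {U : Set V} (hU : IsOpen U) {Γ : V → V →ₗ[ℝ] V →ₗ[ℝ] V} (hΓ : IsConnection U Γ)
    (hsymm : ∀ x ∈ U, ∀ u v : V, Γ x u v = Γ x v u)
    {a b c : V → V} (ha : IsVectorField U a) (hb : IsVectorField U b) (hc : IsVectorField U c)
    {x : V} (hx : x ∈ U) :
    covD Γ a (covD Γ b c) x - covD Γ a (covD Γ c b) x - covD Γ (bracket b c) a x
      = bracket a (bracket b c) x := by
  have h1 : ∀ y ∈ U, covD Γ b c y - covD Γ c b y = bracket b c y := by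
    intro y hy
    simp only [covD, bracket, dirD, hsymm y hy (b y) (c y)]
    abel
  have hev : (fun y => covD Γ b c y - covD Γ c b y) =ᶠ[nhds x] bracket b c :=
    Filter.eventually_of_mem (hU.mem_nhds hx) h1
  have h2 := hev.fderiv_eq (𝕜 := ℝ)
  rw [fderiv_fun_sub (aux_diff hU (aux_cov hU hΓ hb hc) hx)
    (aux_diff hU (aux_cov hU hΓ hc hb) hx)] at h2
  have h3 : covD Γ a (covD Γ b c) x - covD Γ a (covD Γ c b) x = covD Γ a (bracket b c) x := by
    simp only [covD] at h2 h1 ⊢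
    rw [← h2, ← h1 x hx]
    simp only [map_sub, ContinuousLinearMap.sub_apply, map_add]
    abel
  rw [h3]
  simp only [covD, bracket, dirD, hsymm x hx (a x)]
  abel

theorem curv_bianchi {U : Set V} (hU : IsOpen U) {Γ : V → V →ₗ[ℝ] V →ₗ[ℝ] V}
    (hΓ : IsConnection U Γ) (hsymm : ∀ x ∈ U, ∀ u v : V, Γ x u v = Γ x v u)
    {a b c : V → V} (ha : IsVectorField U a) (hb : IsVectorField U b) (hc : IsVectorField U c)
    {x : V} (hx : x ∈ U) :
    curv Γ a b c x + curv Γ b c a x + curv Γ c a b x = 0 := by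
  have e1 := cov_tors hU hΓ hsymm ha hb hc hx
  have e2 := cov_tors hU hΓ hsymm hb hc ha hx
  have e3 := cov_tors hU hΓ hsymm hc ha hb hx
  have hbr : ∀ a b : V → V, bracket a b = VectorField.lieBracket ℝ a b := fun a b => rfl
  have J : bracket a (bracket b c) x + bracket b (bracket c a) x + bracket c (bracket a b) x = 0 := by
    have hs : ∀ {f : V → V}, IsVectorField U f → ContDiffAt ℝ (minSmoothness ℝ 2) f x := fun hf =>
      (ContDiffOn.contDiffAt hf (hU.mem_nhds hx)).of_le (by simp; exact WithTop.coe_le_coe.2 (le_top : (2 : ℕ∞) ≤ ⊤))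
    have := VectorField.leibniz_identity_lieBracket le_rfl (hs ha) (hs hb) (hs hc)
    have s1 : bracket b (bracket c a) x = - bracket b (bracket a c) x := by
      have : bracket c a = - bracket a c := by funext y; simp [bracket]
      rw [this]
      simp [bracket, dirD, fderiv_neg]
      abel
    have s2 : bracket c (bracket a b) x = - bracket (bracket a b) c x := by simp [bracket]
    rw [s1, s2]
    simp only [hbr]
    rw [this]
    abel
  simp only [curv, curvOf]
  rw [← e1, ← e2, ← e3] at J
  rw [← J]
  abel

theorem aux_comm {U : Set V} (hU : IsOpen U) {f : V → ℝ} (hf : ContDiffOn ℝ (⊤ : ℕ∞) f U)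
    {a b : V → V} (ha : IsVectorField U a) (hb : IsVectorField U b) {x : V} (hx : x ∈ U) :
    fderiv ℝ (fun y => fderiv ℝ f y (b y)) x (a x) - fderiv ℝ (fun y => fderiv ℝ f y (a y)) x (b x)
      = fderiv ℝ f x (bracket a b x) := by
  have hd : DifferentiableAt ℝ (fderiv ℝ f) x :=
    ((hf.fderiv_of_isOpen (m := (⊤ : ℕ∞)) hU (by simp)).contDiffAt (hU.mem_nhds hx)).differentiableAt
      (by simp)
  have hs : IsSymmSndFDerivAt ℝ f x :=
    (hf.contDiffAt (hU.mem_nhds hx)).isSymmSndFDerivAt (by simp; exact WithTop.coe_le_coe.2 (le_top : (2 : ℕ∞) ≤ ⊤))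
  rw [fderiv_clm_apply hd (aux_diff hU ha hx), fderiv_clm_apply hd (aux_diff hU hb hx)]
  have := hs (a x) (b x)
  simp [bracket, dirD, this]

theorem curv_skew {U : Set V} (hU : IsOpen U) {Γ : V → V →ₗ[ℝ] V →ₗ[ℝ] V}
    (hΓ : IsConnection U Γ) {g : V → V →ₗ[ℝ] V} (hg : IsMetric U g) (hcomp : Compatible U Γ g)
    {a b c d : V → V} (ha : IsVectorField U a) (hb : IsVectorField U b)
    (hc : IsVectorField U c) (hd : IsVectorField U d) {x : V} (hx : x ∈ U) :
    ⟪g x (curv Γ a b c x), d x⟫ = - ⟪g x (curv Γ a b d x), c x⟫ := by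
  have hG : ∀ {X Y : V → V}, IsVectorField U X → IsVectorField U Y →
      ContDiffOn ℝ (⊤ : ℕ∞) (fun y => ⟪g y (X y), Y y⟫) U := fun hX hY =>
    ContDiffOn.inner ℝ (aux_g hg hX) hY
  have hGd : ∀ {X Y : V → V}, IsVectorField U X → IsVectorField U Y →
      DifferentiableAt ℝ (fun y => ⟪g y (X y), Y y⟫) x := fun hX hY =>
    ((hG hX hY).contDiffAt (hU.mem_nhds hx)).differentiableAt (by simp)
  have hc2 : ∀ {a b : V → V}, IsVectorField U a → IsVectorField U b →
      fderiv ℝ (fun y => fderiv ℝ (fun y => ⟪g y (c y), d y⟫) y (b y)) x (a x) =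
      (⟪g x (covD Γ a (covD Γ b c) x), d x⟫ + ⟪g x (covD Γ b c x), covD Γ a d x⟫) +
      (⟪g x (covD Γ a c x), covD Γ b d x⟫ + ⟪g x (c x), covD Γ a (covD Γ b d) x⟫) := by
    intro a b ha hb
    have hev : (fun y => fderiv ℝ (fun y => ⟪g y (c y), d y⟫) y (b y)) =ᶠ[nhds x]
        fun y => ⟪g y (covD Γ b c y), d y⟫ + ⟪g y (c y), covD Γ b d y⟫ :=
      Filter.eventually_of_mem (hU.mem_nhds hx) (hcomp b c d hb hc hd)
    have hbc := aux_cov hU hΓ hb hc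
    have hbd := aux_cov hU hΓ hb hd
    rw [hev.fderiv_eq, fderiv_fun_add (hGd hbc hd) (hGd hc hbd), ContinuousLinearMap.add_apply,
      hcomp a _ _ ha hbc hd x hx, hcomp a _ _ ha hc hbd x hx]
  have h := aux_comm hU (hG hc hd) ha hb hx
  rw [hc2 ha hb, hc2 hb ha, hcomp _ c d (aux_br hU ha hb) hc hd x hx] at h
  have hsw : ⟪g x (curv Γ a b d x), c x⟫ = ⟪g x (c x), curv Γ a b d x⟫ := by
    rw [(hg.2 x hx).1, real_inner_comm]
  rw [hsw]
  simp only [curv, curvOf, map_sub, inner_sub_left, inner_sub_right]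
  linarith

/-- Eq. (LGS.1b): pair symmetry of the curvature of a Levi-Civita structure,
`ρ(a,b,c)·_g d = ρ(c,d,a)·_g b`. -/
theorem curvature_pair_symmetry
    (U : Set V) (hU : IsOpen U)
    (Γ : V → V →ₗ[ℝ] V →ₗ[ℝ] V) (hΓ : IsConnection U Γ)
    (g : V → V →ₗ[ℝ] V) (hg : IsMetric U g)
    (hcomp : Compatible U Γ g)
    (hsymm : ∀ x ∈ U, ∀ u v : V, Γ x u v = Γ x v u)
    (a b c d : V → V) (ha : IsVectorField U a) (hb : IsVectorField U b)
    (hc : IsVectorField U c) (hd : IsVectorField U d)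
    (x : V) (hx : x ∈ U) :
    ⟪g x (curv Γ a b c x), d x⟫ = ⟪g x (curv Γ c d a x), b x⟫ := by
  have sk : ∀ {a b c d : V → V}, IsVectorField U a → IsVectorField U b → IsVectorField U c →
      IsVectorField U d → ⟪g x (curv Γ a b c x), d x⟫ = - ⟪g x (curv Γ a b d x), c x⟫ :=
    fun ha hb hc hd => curv_skew hU hΓ hg hcomp ha hb hc hd hx
  have an : ∀ a b c d : V → V, ⟪g x (curv Γ a b c x), d x⟫ = - ⟪g x (curv Γ b a c x), d x⟫ := by
    intro a b c d
    rw [curv_anti Γ a b c x, map_neg, inner_neg_left]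
  have bi : ∀ {a b c : V → V}, IsVectorField U a → IsVectorField U b → IsVectorField U c →
      ∀ d : V → V, ⟪g x (curv Γ a b c x), d x⟫ + ⟪g x (curv Γ b c a x), d x⟫
        + ⟪g x (curv Γ c a b x), d x⟫ = 0 := by
    intro a b c ha hb hc d
    rw [← inner_add_left, ← inner_add_left, ← map_add, ← map_add,
      curv_bianchi hU hΓ hsymm ha hb hc hx, map_zero, inner_zero_left]
  have b1 := bi ha hb hc d
  have b2 := bi hb hc hd a
  have b3 := bi hc hd ha b
  have b4 := bi hd ha hb c
  have s1 := sk ha hb hc hd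
  have s2 := sk hb hc ha hd
  have s3 := sk hc ha hb hd
  have s4 := sk hc hd ha hb
  have s5 := sk hd ha hb hc
  have s6 := sk hb hd ha hc
  have n1 := an b d c a
  have n2 := an d b c a
  have n3 := an b d a c
  have n4 := an a c d b
  linarith
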